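/- For the recursively defined elements Q^{(n)} ∈ TL^B_n (Q^{(0)} = 1, Q^{(n+1)} = Q^{(n)} + ([n]_s/[n+1]_s)·Q^{(n)} e_n Q^{(n)}), one has (e_n Q^{(n)})² = −([n+1]_s/[n]_s) · e_n Q^{(n)} in TL^B_{n+1}, for all n ≥ 1. -/

import Mathlib

noncomputable section
open scoped Classical

/-! ### The field `ℂ(q,s)` and two-variable quantum integers -/

/-- The field `ℂ(q,s)` of rational functions in two variables. -/
abbrev 𝕃 : Type := FractionRing (MvPolynomial (Fin 2) ℂ)

/-- The variable `q`. -/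
def qB : 𝕃 := algebraMap (MvPolynomial (Fin 2) ℂ) 𝕃 (MvPolynomial.X 0)

/-- The variable `s`. -/
def sB : 𝕃 := algebraMap (MvPolynomial (Fin 2) ℂ) 𝕃 (MvPolynomial.X 1)

/-- The two-variable quantum integer `[n]_s`: `[0]_s = 1` and
`[n]_s = q^(n-1) s + q^(-(n-1)) s⁻¹` for `n ≥ 1`. -/
def bqInt (n : ℤ) : 𝕃 := if n = 0 then 1 else qB ^ (n - 1) * sB + qB ^ (1 - n) * sB⁻¹

/-! ### The Temperley–Lieb algebra of type B and its Jones–Wenzl projections -/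

/-- Defining relations of the Temperley–Lieb algebra `TL^B_n` of type B.
The generator indexed by `i : Fin n` represents `e_i` (labels `0, …, n-1`):
the type A relations among `e_1, …, e_{n-1}`, together with `e_0² = -[1]_s e_0`,
`e_1 e_0 e_1 = (q s⁻¹ + q⁻¹ s) e_1`, and `e_0 e_i = e_i e_0` for `i ≥ 2`. -/
inductive TLBrel (n : ℕ) : FreeAlgebra 𝕃 (Fin n) → FreeAlgebra 𝕃 (Fin n) → Prop
  | sqA (i : Fin n) (h : 1 ≤ (i : ℕ)) :
      TLBrel n (FreeAlgebra.ι 𝕃 i * FreeAlgebra.ι 𝕃 i) ((-(qB + qB⁻¹)) • FreeAlgebra.ι 𝕃 i)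
  | sq0 (i : Fin n) (h : (i : ℕ) = 0) :
      TLBrel n (FreeAlgebra.ι 𝕃 i * FreeAlgebra.ι 𝕃 i) ((-(bqInt 1)) • FreeAlgebra.ι 𝕃 i)
  | braidA (i j : Fin n) (hi : 1 ≤ (i : ℕ)) (hj : 1 ≤ (j : ℕ))
      (h : (j : ℕ) = i + 1 ∨ (i : ℕ) = j + 1) :
      TLBrel n (FreeAlgebra.ι 𝕃 i * FreeAlgebra.ι 𝕃 j * FreeAlgebra.ι 𝕃 i) (FreeAlgebra.ι 𝕃 i)
  | braid0 (i j : Fin n) (hi : (i : ℕ) = 1) (hj : (j : ℕ) = 0) :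
      TLBrel n (FreeAlgebra.ι 𝕃 i * FreeAlgebra.ι 𝕃 j * FreeAlgebra.ι 𝕃 i)
        ((qB * sB⁻¹ + qB⁻¹ * sB) • FreeAlgebra.ι 𝕃 i)
  | comm (i j : Fin n) (h : (i : ℕ) + 1 < j ∨ (j : ℕ) + 1 < i) :
      TLBrel n (FreeAlgebra.ι 𝕃 i * FreeAlgebra.ι 𝕃 j) (FreeAlgebra.ι 𝕃 j * FreeAlgebra.ι 𝕃 i)

/-- The Temperley–Lieb algebra `TL^B_n` of type B, with generators `e_0, …, e_{n-1}`. -/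
abbrev TLB (n : ℕ) : Type := RingQuot (TLBrel n)

/-- The generator `e_i` of `TL^B_n` (0-based labels). -/
def EB {n : ℕ} (i : Fin n) : TLB n := RingQuot.mkAlgHom 𝕃 (TLBrel n) (FreeAlgebra.ι 𝕃 i)

set_option synthInstance.maxHeartbeats 1000000 in
/-- The natural inclusion `TL^B_n → TL^B_{n+1}`, sending `e_i` to `e_i`. -/
def TLBincl (n : ℕ) : TLB n →ₐ[𝕃] TLB (n + 1) :=
  RingQuot.liftAlgHom 𝕃
    ⟨FreeAlgebra.lift 𝕃 (fun i => EB i.castSucc), by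
      intro x y h
      induction h with
      | sqA i h =>
          have h2 := RingQuot.mkAlgHom_rel 𝕃 (TLBrel.sqA i.castSucc (by simpa using h))
          simp only [map_mul, map_smul, FreeAlgebra.lift_ι_apply, EB] at h2 ⊢
          exact h2
      | sq0 i h =>
          have h2 := RingQuot.mkAlgHom_rel 𝕃 (TLBrel.sq0 i.castSucc (by simpa using h))
          simp only [map_mul, map_smul, FreeAlgebra.lift_ι_apply, EB] at h2 ⊢
          exact h2
      | braidA i j hi hj h =>
          have h2 := RingQuot.mkAlgHom_rel 𝕃
            (TLBrel.braidA i.castSucc j.castSucc (by simpa using hi) (by simpa using hj)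
              (by simpa using h))
          simp only [map_mul, FreeAlgebra.lift_ι_apply, EB] at h2 ⊢
          exact h2
      | braid0 i j hi hj =>
          have h2 := RingQuot.mkAlgHom_rel 𝕃
            (TLBrel.braid0 i.castSucc j.castSucc (by simpa using hi) (by simpa using hj))
          simp only [map_mul, map_smul, FreeAlgebra.lift_ι_apply, EB] at h2 ⊢
          exact h2
      | comm i j h =>
          have h2 := RingQuot.mkAlgHom_rel 𝕃
            (TLBrel.comm i.castSucc j.castSucc (by simpa using h))
          simp only [map_mul, FreeAlgebra.lift_ι_apply, EB] at h2 ⊢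
          exact h2⟩

/-- The iterated natural inclusion `TL^B_n → TL^B_{n+k}`. -/
def TLBinclIter (n : ℕ) : (k : ℕ) → TLB n →ₐ[𝕃] TLB (n + k)
  | 0 => AlgHom.id 𝕃 (TLB n)
  | k + 1 => (TLBincl (n + k)).comp (TLBinclIter n k)

/-- The type B Jones–Wenzl projection `Q^{(n)} ∈ TL^B_n`, via the recurrence
`Q^{(0)} = 1`, `Q^{(n+1)} = Q^{(n)} + ([n]_s/[n+1]_s) Q^{(n)} e_n Q^{(n)}`. -/
def JWB : (n : ℕ) → TLB n
  | 0 => 1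
  | n + 1 =>
      TLBincl n (JWB n) +
        (bqInt n / bqInt (n + 1)) •
          (TLBincl n (JWB n) * EB (Fin.last n) * TLBincl n (JWB n))

/-!
The recursion has the shape `P = Q + c Q e Q` with `Q` idempotent. If `f` commutes with `Q`,
`f² = a f` and `f e f = t f`, then `f P f = (a + c t) f Q`, and as `Q P = P` this gives
`(f P)² = (a + c t) f P`. So the formula at level `n + 1` needs only the idempotence of `Q^{(n)}`.
Conversely, idempotence passes from `Q` to `P` exactly because `(e Q)² = -c⁻¹ e Q`, which is the
formula one level below; idempotence of all `Q^{(n)}` thus follows by a two-step induction.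
-/

section WenzlStep

variable {R A B : Type*} [CommSemiring R] [Semiring A] [Algebra R A] [Semiring B] [Algebra R B]

/-- The operation `Q + c Q e Q` underlying the Jones–Wenzl recursion, for arbitrary elements `Q`
and `e` of an algebra and an arbitrary scalar `c`. -/
def wenzlStep (c : R) (Q e : A) : A := Q + c • (Q * e * Q)

theorem map_wenzlStep (φ : A →ₐ[R] B) (c : R) (Q e : A) :
    φ (wenzlStep c Q e) = wenzlStep c (φ Q) (φ e) := by
  simp only [wenzlStep, map_add, map_smul, map_mul]

theorem mul_wenzlStep {Q : A} (hQ : IsIdempotentElem Q) (c : R) (e : A) :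
    Q * wenzlStep c Q e = wenzlStep c Q e := by
  simp only [wenzlStep, mul_add, mul_smul_comm, ← mul_assoc, hQ.eq]

theorem isIdempotentElem_wenzlStep {Q e : A} {c b : R} (hQ : IsIdempotentElem Q)
    (he : (e * Q) * (e * Q) = b • (e * Q)) (hcb : 1 + c * b = 0) :
    IsIdempotentElem (wenzlStep c Q e) := by
  have hcore : Q * e * wenzlStep c Q e = 0 := by
    calc Q * e * wenzlStep c Q e
        = Q * (e * Q) + c • (Q * ((e * Q) * (e * Q))) := by
          simp only [wenzlStep, mul_add, mul_smul_comm, mul_assoc]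
      _ = (1 + c * b) • (Q * (e * Q)) := by
          rw [he, mul_smul_comm, smul_smul, add_smul, one_smul]
      _ = 0 := by rw [hcb, zero_smul]
  calc wenzlStep c Q e * wenzlStep c Q e
      = (Q + c • (Q * e * Q)) * wenzlStep c Q e := rfl
    _ = Q * wenzlStep c Q e + c • (Q * e * (Q * wenzlStep c Q e)) := by
        rw [add_mul, smul_mul_assoc, mul_assoc (Q * e)]
    _ = wenzlStep c Q e := by rw [mul_wenzlStep hQ, hcore, smul_zero, add_zero]

theorem mul_wenzlStep_mul {Q e f : A} {a t : R} (hQ : IsIdempotentElem Q) (hfQ : Commute f Q)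
    (hff : f * f = a • f) (hfef : f * e * f = t • f) (c : R) :
    f * wenzlStep c Q e * f = (a + c * t) • (f * Q) := by
  have hlin : f * Q * f = a • (f * Q) := by
    rw [mul_assoc, ← hfQ.eq, ← mul_assoc, hff, smul_mul_assoc]
  have hquad : f * (Q * e * Q) * f = t • (f * Q) := by
    calc f * (Q * e * Q) * f = (f * Q) * e * (Q * f) := by simp only [mul_assoc]
      _ = (Q * f) * e * (f * Q) := by rw [hfQ.eq]
      _ = Q * (f * e * f) * Q := by simp only [mul_assoc]
      _ = t • (f * Q) := by
        rw [hfef, mul_smul_comm, smul_mul_assoc, ← hfQ.eq, mul_assoc, hQ.eq]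
  rw [wenzlStep, mul_add, add_mul, hlin, mul_smul_comm, smul_mul_assoc, hquad, smul_smul, add_smul]

theorem mul_wenzlStep_mul_self {Q e f : A} {a t : R} (hQ : IsIdempotentElem Q)
    (hfQ : Commute f Q) (hff : f * f = a • f) (hfef : f * e * f = t • f) (c : R) :
    (f * wenzlStep c Q e) * (f * wenzlStep c Q e) = (a + c * t) • (f * wenzlStep c Q e) := by
  rw [← mul_assoc, mul_wenzlStep_mul hQ hfQ hff hfef, smul_mul_assoc, mul_assoc, mul_wenzlStep hQ]

end WenzlStep

theorem qB_ne_zero : qB ≠ 0 := by simp [qB]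

theorem sB_ne_zero : sB ≠ 0 := by simp [sB]

theorem bqInt_zero : bqInt 0 = 1 := if_pos rfl

theorem bqInt_of_ne_zero {n : ℤ} (hn : n ≠ 0) :
    bqInt n = qB ^ (n - 1) * sB + qB ^ (1 - n) * sB⁻¹ :=
  if_neg hn

theorem qB_pow_mul_sB_sq_add_one_ne_zero (k : ℕ) : (qB ^ k * sB) ^ 2 + 1 ≠ 0 := by
  let p : MvPolynomial (Fin 2) ℂ := (MvPolynomial.X 0 ^ k * MvPolynomial.X 1) ^ 2 + 1
  have hp : p ≠ 0 := fun h ↦ by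
    simpa [p] using congrArg (MvPolynomial.eval (0 : Fin 2 → ℂ)) h
  have hmap : algebraMap (MvPolynomial (Fin 2) ℂ) 𝕃 p = (qB ^ k * sB) ^ 2 + 1 := by
    simp only [p, map_add, map_mul, map_pow, map_one, qB, sB]
  rw [← hmap]
  exact (map_ne_zero_iff _ (IsFractionRing.injective _ 𝕃)).mpr hp

theorem bqInt_natCast_ne_zero (n : ℕ) : bqInt n ≠ 0 := by
  rcases n with _ | k
  · simp [bqInt_zero]
  have hq := pow_ne_zero k qB_ne_zero
  have hs := sB_ne_zero
  have hform : bqInt (k + 1 : ℕ) = ((qB ^ k * sB) ^ 2 + 1) / (qB ^ k * sB) := by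
    rw [bqInt_of_ne_zero (by omega), show ((k + 1 : ℕ) : ℤ) - 1 = k by push_cast; ring,
      show 1 - ((k + 1 : ℕ) : ℤ) = -k by push_cast; ring, zpow_neg, zpow_natCast]
    field_simp
  rw [hform]
  exact div_ne_zero (qB_pow_mul_sB_sq_add_one_ne_zero k) (mul_ne_zero hq hs)

/-- The scalar `t` in the relation `e_{n+1} e_n e_{n+1} = t e_{n+1}`. -/
def braidCoeff (n : ℕ) : 𝕃 := if n = 0 then qB * sB⁻¹ + qB⁻¹ * sB else 1

-- At `n = 0` the right-hand side is not `[0]_s = 1`; the relation `e_1 e_0 e_1 = t e_1`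
-- supplies the value that the formula for `[n]_s` would have there.
theorem braidCoeff_mul_bqInt (n : ℕ) :
    braidCoeff n * bqInt n = qB ^ ((n : ℤ) - 1) * sB + qB ^ (1 - (n : ℤ)) * sB⁻¹ := by
  rcases eq_or_ne n 0 with rfl | hn
  · simp [braidCoeff, bqInt_zero, add_comm]
  · rw [braidCoeff, if_neg hn, one_mul, bqInt_of_ne_zero (by exact_mod_cast hn)]

theorem quantumTwo_mul_bqInt_succ (n : ℕ) :
    (qB + qB⁻¹) * bqInt (n + 1) = bqInt (n + 2) + braidCoeff n * bqInt n := by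
  have hq := qB_ne_zero
  rw [braidCoeff_mul_bqInt, bqInt_of_ne_zero (by omega), bqInt_of_ne_zero (by omega),
    show (n : ℤ) + 1 - 1 = n by ring, show 1 - ((n : ℤ) + 1) = -n by ring,
    show (n : ℤ) + 2 - 1 = n + 1 by ring, show 1 - ((n : ℤ) + 2) = -n - 1 by ring,
    show 1 - (n : ℤ) = -n + 1 by ring]
  simp only [zpow_add_one₀ hq, zpow_sub_one₀ hq]
  ring

theorem neg_quantumTwo_add_bqInt_div_mul_braidCoeff (n : ℕ) :
    -(qB + qB⁻¹) + bqInt n / bqInt (n + 1) * braidCoeff n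
      = -(bqInt (n + 2) / bqInt (n + 1)) := by
  have hne : bqInt (n + 1) ≠ 0 := mod_cast bqInt_natCast_ne_zero (n + 1)
  rw [eq_neg_iff_add_eq_zero, div_mul_eq_mul_div, add_assoc, ← add_div, neg_add_eq_zero,
    eq_div_iff hne]
  linear_combination quantumTwo_mul_bqInt_succ n

section Generators

variable {n : ℕ}

theorem EB_mul_self_of_pos {i : Fin n} (hi : 1 ≤ (i : ℕ)) :
    EB i * EB i = (-(qB + qB⁻¹)) • EB i := by
  simpa only [EB, map_mul, map_smul] using RingQuot.mkAlgHom_rel 𝕃 (TLBrel.sqA i hi)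

theorem EB_mul_self_of_eq_zero {i : Fin n} (hi : (i : ℕ) = 0) :
    EB i * EB i = (-bqInt 1) • EB i := by
  simpa only [EB, map_mul, map_smul] using RingQuot.mkAlgHom_rel 𝕃 (TLBrel.sq0 i hi)

theorem EB_mul_EB_mul_EB_of_succ {i j : Fin n} (hij : (i : ℕ) = j + 1) :
    EB i * EB j * EB i = braidCoeff j • EB i := by
  rcases Nat.eq_zero_or_pos (j : ℕ) with hj | hj
  · rw [braidCoeff, if_pos hj]
    simpa only [EB, map_mul, map_smul] using
      RingQuot.mkAlgHom_rel 𝕃 (TLBrel.braid0 i j (by omega) hj)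
  · rw [braidCoeff, if_neg hj.ne', one_smul]
    simpa only [EB, map_mul] using
      RingQuot.mkAlgHom_rel 𝕃 (TLBrel.braidA i j (by omega) hj (Or.inr hij))

theorem commute_EB_EB_of_lt {i j : Fin n} (hij : (i : ℕ) + 1 < j) : Commute (EB i) (EB j) := by
  simpa only [EB, Commute, SemiconjBy, map_mul] using
    RingQuot.mkAlgHom_rel 𝕃 (TLBrel.comm i j (Or.inl hij))

theorem TLBincl_EB (i : Fin n) : TLBincl n (EB i) = EB i.castSucc := by
  simp only [TLBincl, EB, RingQuot.liftAlgHom_mkAlgHom_apply, FreeAlgebra.lift_ι_apply]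

theorem commute_EB_last_TLBincl_TLBincl (x : TLB n) :
    Commute (EB (Fin.last (n + 1))) (TLBincl (n + 1) (TLBincl n x)) := by
  obtain ⟨y, rfl⟩ := RingQuot.mkAlgHom_surjective 𝕃 (TLBrel n) x
  induction y using FreeAlgebra.induction with
  | grade0 r =>
    simp only [AlgHom.commutes]
    exact Algebra.commute_algebraMap_right r _
  | grade1 i =>
    change Commute _ (TLBincl (n + 1) (TLBincl n (EB i)))
    rw [TLBincl_EB, TLBincl_EB]
    exact (commute_EB_EB_of_lt (by simp)).symm
  | mul a b ha hb => simpa only [map_mul] using ha.mul_right hb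
  | add a b ha hb => simpa only [map_add] using ha.add_right hb

end Generators

theorem JWB_succ (n : ℕ) :
    JWB (n + 1) = wenzlStep (bqInt n / bqInt (n + 1)) (TLBincl n (JWB n)) (EB (Fin.last n)) :=
  rfl

theorem EB_zero_mul_JWB_zero_mul_self :
    (EB (Fin.last 0) * TLBincl 0 (JWB 0)) * (EB (Fin.last 0) * TLBincl 0 (JWB 0)) =
      (-(bqInt 1 / bqInt 0)) • (EB (Fin.last 0) * TLBincl 0 (JWB 0)) := by
  simp only [JWB, map_one, mul_one, bqInt_zero, div_one]
  exact EB_mul_self_of_eq_zero rfl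

theorem EB_last_mul_JWB_succ_mul_self {n : ℕ} (hQ : IsIdempotentElem (JWB n)) :
    (EB (Fin.last (n + 1)) * TLBincl (n + 1) (JWB (n + 1))) *
        (EB (Fin.last (n + 1)) * TLBincl (n + 1) (JWB (n + 1))) =
      (-(bqInt (n + 2) / bqInt (n + 1))) •
        (EB (Fin.last (n + 1)) * TLBincl (n + 1) (JWB (n + 1))) := by
  have hbraid : EB (Fin.last (n + 1)) * EB (Fin.last n).castSucc * EB (Fin.last (n + 1))
      = braidCoeff n • EB (Fin.last (n + 1)) :=
    EB_mul_EB_mul_EB_of_succ rfl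
  rw [JWB_succ, map_wenzlStep, TLBincl_EB, ← neg_quantumTwo_add_bqInt_div_mul_braidCoeff]
  exact mul_wenzlStep_mul_self ((hQ.map _).map _) (commute_EB_last_TLBincl_TLBincl _)
    (EB_mul_self_of_pos (by simp)) hbraid _

theorem isIdempotentElem_JWB_succ {n : ℕ} (hQ : IsIdempotentElem (JWB n))
    (he : (EB (Fin.last n) * TLBincl n (JWB n)) * (EB (Fin.last n) * TLBincl n (JWB n)) =
      (-(bqInt (n + 1) / bqInt n)) • (EB (Fin.last n) * TLBincl n (JWB n))) :
    IsIdempotentElem (JWB (n + 1)) := by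
  have hn : bqInt n ≠ 0 := bqInt_natCast_ne_zero n
  have hn' : bqInt (n + 1) ≠ 0 := mod_cast bqInt_natCast_ne_zero (n + 1)
  have hcancel : 1 + bqInt n / bqInt (n + 1) * -(bqInt (n + 1) / bqInt n) = 0 := by
    field_simp
    ring
  exact isIdempotentElem_wenzlStep (hQ.map _) he hcancel

theorem isIdempotentElem_JWB : ∀ n : ℕ, IsIdempotentElem (JWB n)
  | 0 => IsIdempotentElem.one
  | 1 => isIdempotentElem_JWB_succ (isIdempotentElem_JWB 0) EB_zero_mul_JWB_zero_mul_self
  | n + 2 => isIdempotentElem_JWB_succ (isIdempotentElem_JWB (n + 1))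
      (EB_last_mul_JWB_succ_mul_self (isIdempotentElem_JWB n))

/-- For `n ≥ 1`, `(e_n Q^{(n)})² = -([n+1]_s/[n]_s) e_n Q^{(n)}`
in `TL^B_{n+1}`. -/
theorem e_JWB_sq (n : ℕ) (hn : 1 ≤ n) :
    (EB (Fin.last n) * TLBincl n (JWB n)) * (EB (Fin.last n) * TLBincl n (JWB n)) =
      (-(bqInt (n + 1) / bqInt n)) • (EB (Fin.last n) * TLBincl n (JWB n)) := by
  obtain ⟨m, rfl⟩ := Nat.exists_eq_add_of_le' hn
  exact EB_last_mul_JWB_succ_mul_self (isIdempotentElem_JWB m)
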